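/- arXiv:2501.11991 — 2 statements merged into one kernel-verified Lean document; each statement's English description precedes it below -/
import Mathlib

section
/- Let k ≥ 2 be an integer, and let y be a real parameter with y ∉ {0, 1/3} and U_k((1-y)/(2y)) ≠ 0, and set ψ = (1-y)/(2y). Then the sum of all entries of C(y)^{-1} satisfies Σ_{i=1}^{k} Σ_{j=1}^{k} (C(y)^{-1})_{ij} = k/(1-3y) - (2y/(1-3y)²)·(U_k(ψ) - U_{k-1}(ψ) - 1)/U_k(ψ). -/
/-- Evaluation of the Chebyshev polynomial of the second kind `U_n` at a real `x`. -/
noncomputable def chebU (n : ℤ) (x : ℝ) : ℝ := (Polynomial.Chebyshev.U ℝ n).eval x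

/-- The `k×k` tridiagonal matrix `C(y)` with diagonal entries `1-y`, sub- and super-diagonal
entries `-y`, and all other entries `0`. -/
def Cmat (k : ℕ) (y : ℝ) : Matrix (Fin k) (Fin k) ℝ :=
  Matrix.of fun i j =>
    if (i : ℕ) = (j : ℕ) then 1 - y
    else if (i : ℕ) + 1 = (j : ℕ) ∨ (j : ℕ) + 1 = (i : ℕ) then -y
    else 0

lemma chebU_rec (n : ℤ) (x : ℝ) : chebU (n + 1) x = 2 * x * chebU n x - chebU (n - 1) x := by
  simp [chebU, Polynomial.Chebyshev.U_add_one]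

lemma chebU_neg_one (x : ℝ) : chebU (-1) x = 0 := by simp [chebU]

lemma chebU_zero (x : ℝ) : chebU 0 x = 1 := by simp [chebU]

lemma Cmat_mulVec_apply (k : ℕ) (y : ℝ) (f : ℕ → ℝ) (h0 : f 0 = 0) (hk : f (k + 1) = 0)
    (i : Fin k) :
    (Matrix.mulVec (Cmat k y) (fun j : Fin k => f (j + 1))) i =
      (1 - y) * f (i + 1) - y * f i - y * f (i + 2) := by
  obtain ⟨i, hi⟩ := i
  have h1 : (Matrix.mulVec (Cmat k y) (fun j : Fin k => f (j + 1))) ⟨i, hi⟩ =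
      ∑ j ∈ Finset.range k, ((if j = i then (1 - y) * f (i + 1) else 0)
        + (if j = i + 1 then -y * f (i + 2) else 0)
        + (if j + 1 = i then -y * f i else 0)) := by
    rw [Finset.sum_range]
    simp only [Matrix.mulVec, dotProduct, Cmat, Matrix.of_apply]
    refine Finset.sum_congr rfl fun j _ => ?_
    obtain ⟨j, hj⟩ := j
    simp only
    rcases lt_trichotomy i j with h | h | h
    · by_cases h' : j = i + 1
      · subst h'
        have h5 : ¬ (i + 1 + 1 = i) := by omega
        simp [h5]
      · rw [if_neg (by omega), if_neg (by omega), if_neg (by omega), if_neg (by omega),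
          if_neg (by omega)]
        simp
    · subst h
      simp
    · by_cases h' : i = j + 1
      · subst h'
        rw [if_neg (by omega), if_pos (by omega), if_neg (by omega), if_neg (by omega),
          if_pos rfl]
        simp
      · rw [if_neg (by omega), if_neg (by omega), if_neg (by omega), if_neg (by omega),
          if_neg (by omega)]
        simp
  rw [h1, Finset.sum_add_distrib, Finset.sum_add_distrib, Finset.sum_ite_eq', Finset.sum_ite_eq',
    if_pos (by simpa using hi)]
  have h2 : (if i + 1 ∈ Finset.range k then -y * f (i + 2) else 0) = -y * f (i + 2) := by
    split_ifs with h
    · rfl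
    · have : i + 2 = k + 1 := by simp at h; omega
      rw [this, hk]; simp
  have h3 : ∑ j ∈ Finset.range k, (if j + 1 = i then -y * f i else 0) = -y * f i := by
    rcases i with _ | m
    · simp [h0]
    · simp only [Nat.add_right_cancel_iff]
      rw [Finset.sum_ite_eq', if_pos (by simp; omega)]
  rw [h2, h3]
  simp only
  ring

lemma Cmat_isUnit (k : ℕ) (y : ℝ) (hy0 : y ≠ 0)
    (hU : chebU (k : ℤ) ((1 - y) / (2 * y)) ≠ 0) : IsUnit (Cmat k y) := by
  rw [← Matrix.mulVec_injective_iff_isUnit]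
  change Function.Injective (Matrix.mulVecLin (Cmat k y))
  rw [injective_iff_map_eq_zero (Matrix.mulVecLin (Cmat k y))]
  intro v hv
  rw [Matrix.mulVecLin_apply] at hv
  set ψ := (1 - y) / (2 * y) with hψ
  have hψ' : 1 - y = 2 * ψ * y := by rw [hψ]; field_simp
  let f : ℕ → ℝ := fun n => if h : 0 < n ∧ n ≤ k then v ⟨n - 1, by omega⟩ else 0
  have hf0 : f 0 = 0 := by simp [f]
  have hfk : f (k + 1) = 0 := by simp [f]
  have hfv : (fun j : Fin k => f (j + 1)) = v := by
    funext j
    have := j.2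
    simp only [f]
    rw [dif_pos (by omega)]
    simp
  have hrec : ∀ n, n < k → f (n + 2) = 2 * ψ * f (n + 1) - f n := by
    intro n hn
    have h := Cmat_mulVec_apply k y f hf0 hfk ⟨n, hn⟩
    rw [hfv, hv, hψ'] at h
    simp only [Pi.zero_apply] at h
    apply mul_left_cancel₀ hy0
    linarith
  have key : ∀ n, n ≤ k → f n = chebU ((n : ℤ) - 1) ψ * f 1 ∧ f (n + 1) = chebU n ψ * f 1 := by
    intro n
    induction n with
    | zero => intro _; simp [hf0, chebU_neg_one, chebU_zero]
    | succ n ih =>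
      intro hn
      obtain ⟨ha, hb⟩ := ih (by omega)
      refine ⟨by simpa using hb, ?_⟩
      rw [hrec n (by omega), ha, hb]
      push_cast
      rw [chebU_rec]
      ring
  have h1 : f 1 = 0 := by
    have := (key k le_rfl).2
    rw [hfk] at this
    exact (mul_eq_zero.mp this.symm).resolve_left hU
  rw [← hfv]
  funext j
  rw [(key j j.2.le).2, h1]
  simp

lemma sum_chebU (k : ℕ) (x : ℝ) :
    (2 * x - 2) * ∑ i ∈ Finset.range k, chebU i x = chebU k x - chebU ((k : ℤ) - 1) x - 1 := by
  induction k with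
  | zero => simp [chebU_neg_one, chebU_zero]
  | succ n ih =>
    rw [Finset.sum_range_succ, mul_add, ih]
    push_cast
    rw [chebU_rec, add_sub_cancel_right]
    ring

/-- With `ψ = (1-y)/(2y)`, the sum of all entries of `C(y)⁻¹` equals
`k/(1-3y) - (2y/(1-3y)²)·(U_k(ψ) - U_{k-1}(ψ) - 1)/U_k(ψ)`. -/
theorem sum_of_entries_of_inverse (k : ℕ) (hk : 2 ≤ k) (y : ℝ) (hy0 : y ≠ 0)
    (hy3 : y ≠ 1 / 3) (hU : chebU (k : ℤ) ((1 - y) / (2 * y)) ≠ 0) :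
    ∑ i : Fin k, ∑ j : Fin k, (Cmat k y)⁻¹ i j =
      k / (1 - 3 * y) -
        2 * y / (1 - 3 * y) ^ 2 *
          ((chebU (k : ℤ) ((1 - y) / (2 * y)) - chebU ((k : ℤ) - 1) ((1 - y) / (2 * y)) - 1) /
            chebU (k : ℤ) ((1 - y) / (2 * y))) := by
  have hunit := Cmat_isUnit k y hy0 hU
  set ψ := (1 - y) / (2 * y) with hψ
  have hψ' : 1 - y = 2 * ψ * y := by rw [hψ]; field_simp
  clear_value ψ
  have h3 : 1 - 3 * y ≠ 0 := fun h => hy3 (by linarith)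
  let f : ℕ → ℝ := fun n =>
    1 / (1 - 3 * y) * (1 - (chebU ((n : ℤ) - 1) ψ + chebU ((k : ℤ) - n) ψ) / chebU k ψ)
  have hf0 : f 0 = 0 := by simp [f, chebU_neg_one, hU]
  have hfk : f (k + 1) = 0 := by simp [f, chebU_neg_one, hU]
  have hs : Matrix.mulVec (Cmat k y) (fun j : Fin k => f (j + 1)) = fun _ => 1 := by
    funext i
    rw [Cmat_mulVec_apply k y f hf0 hfk i]
    simp only [f]
    have e1 := chebU_rec (i : ℤ) ψ
    have e2 := chebU_rec ((k : ℤ) - i - 1) ψ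
    have a1 : (((i : ℕ) + 1 : ℕ) : ℤ) - 1 = i := by push_cast; ring
    have a2 : (((i : ℕ) + 2 : ℕ) : ℤ) - 1 = i + 1 := by push_cast; ring
    have a3 : (k : ℤ) - (((i : ℕ) + 1 : ℕ) : ℤ) = k - i - 1 := by push_cast; ring
    have a4 : (k : ℤ) - (((i : ℕ) + 2 : ℕ) : ℤ) = k - i - 1 - 1 := by push_cast; ring
    rw [sub_add_cancel] at e2
    rw [a1, a2, a3, a4, e1, e2, hψ']
    have h4 : 2 * ψ * y - 2 * y = 1 - 3 * y := by linarith
    clear_value f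
    generalize 1 - 3 * y = d at h3 h4 ⊢
    field_simp
    linear_combination (chebU k ψ) * h4
  have hinv : Matrix.mulVec (Cmat k y)⁻¹ (fun _ => 1) = fun j : Fin k => f (j + 1) := by
    rw [← hs, Matrix.mulVec_mulVec,
      Matrix.nonsing_inv_mul _ ((Matrix.isUnit_iff_isUnit_det _).mp hunit), Matrix.one_mulVec]
  have hrow : ∀ i : Fin k, ∑ j : Fin k, (Cmat k y)⁻¹ i j = f (i + 1) := by
    intro i
    have := congrFun hinv i
    simpa [Matrix.mulVec, dotProduct] using this
  rw [Finset.sum_congr rfl fun i _ => hrow i, ← Finset.sum_range (fun i => f (i + 1))]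
  have hS := sum_chebU k ψ
  have hS2 : ∑ i ∈ Finset.range k, chebU ((k : ℤ) - ((i + 1 : ℕ) : ℤ)) ψ =
      ∑ i ∈ Finset.range k, chebU i ψ := by
    rw [← Finset.sum_range_reflect]
    refine Finset.sum_congr rfl fun i hi => ?_
    have : i < k := by simpa using hi
    congr 1
    omega
  have hS1 : ∑ i ∈ Finset.range k, chebU (((i + 1 : ℕ) : ℤ) - 1) ψ =
      ∑ i ∈ Finset.range k, chebU i ψ := by simp
  have hsum : ∑ i ∈ Finset.range k, f (i + 1) = 1 / (1 - 3 * y) *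
      (k - (2 * ∑ i ∈ Finset.range k, chebU i ψ) / chebU k ψ) := by
    simp only [f]
    rw [← Finset.mul_sum, Finset.sum_sub_distrib, ← Finset.sum_div, Finset.sum_add_distrib,
      hS1, hS2]
    simp [two_mul]
  have hS3 : y * (chebU k ψ - chebU ((k : ℤ) - 1) ψ - 1) =
      (1 - 3 * y) * ∑ i ∈ Finset.range k, chebU i ψ := by
    rw [← hS]
    linear_combination (-∑ i ∈ Finset.range k, chebU i ψ) * hψ'
  rw [hsum]
  generalize ∑ i ∈ Finset.range k, chebU i ψ = S at *
  field_simp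
  linear_combination 2 * hS3
end

section
/- Let k ≥ 2 be an integer, let y be a real parameter with y ∉ {0, 1/3} and U_k((1-y)/(2y)) ≠ 0, and set ψ = (1-y)/(2y). For i ∈ [k] define α_i(x) = (U_{k-i}(x)(U_i(x) - 1) - U_{i-1}(x)(U_{k-i-1}(x) + 1))/U_k(x). Then the i-th row sum of C(y)^{-1} satisfies Σ_{j=1}^{k} (C(y)^{-1})_{ij} = α_i(ψ)/(1-3y) for every i ∈ [k]. -/
/-- `α_i(x) = (U_{k-i}(x)(U_i(x) - 1) - U_{i-1}(x)(U_{k-i-1}(x) + 1))/U_k(x)`. -/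
noncomputable def alph (k : ℕ) (i : ℤ) (x : ℝ) : ℝ :=
  (chebU ((k : ℤ) - i) x * (chebU i x - 1) - chebU (i - 1) x * (chebU ((k : ℤ) - i - 1) x + 1)) /
    chebU (k : ℤ) x

/-- Action of `C(y)` on a vector extended by zero at both ends. -/
lemma Cmat_row (k : ℕ) (y : ℝ) (f : ℕ → ℝ) (h0 : f 0 = 0) (hk : f (k + 1) = 0) (i : Fin k) :
    (Cmat k y).mulVec (fun j => f ((j : ℕ) + 1)) i
      = (1 - y) * f ((i : ℕ) + 1) - y * f (i : ℕ) - y * f ((i : ℕ) + 2) := by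
  obtain ⟨i, hi⟩ := i
  simp only [Matrix.mulVec, dotProduct, Cmat, Matrix.of_apply]
  rw [Fin.sum_univ_eq_sum_range (fun j : ℕ => (if i = j then 1 - y
    else if i + 1 = j ∨ j + 1 = i then -y else 0) * f (j + 1)) k]
  have e : ∀ j : ℕ, (if i = j then 1 - y
      else if i + 1 = j ∨ j + 1 = i then -y else 0) * f (j + 1)
      = (if i = j then (1 - y) * f (j + 1) else 0) + (if i + 1 = j then -y * f (j + 1) else 0)
        + (if j + 1 = i then -y * f (j + 1) else 0) := by
    intro j
    split_ifs <;> first | omega | ring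
  rw [Finset.sum_congr rfl (fun j _ => e j), Finset.sum_add_distrib, Finset.sum_add_distrib,
    Finset.sum_ite_eq, Finset.sum_ite_eq]
  have e2 : (∑ j ∈ Finset.range k, if j + 1 = i then -y * f (j + 1) else 0) = -y * f i := by
    cases i with
    | zero => simp [h0]
    | succ m =>
      simp only [add_left_inj]
      rw [Finset.sum_ite_eq', if_pos (Finset.mem_range.2 (by omega))]
  rw [e2, if_pos (Finset.mem_range.2 hi)]
  by_cases h : i + 1 < k
  · rw [if_pos (Finset.mem_range.2 h)]
    ring
  · rw [if_neg (by simpa using h)]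
    have : i + 2 = k + 1 := by omega
    rw [this, hk]
    ring

lemma Cmat_det (k : ℕ) (y : ℝ) (hy0 : y ≠ 0)
    (hU : chebU (k : ℤ) ((1 - y) / (2 * y)) ≠ 0) : IsUnit (Cmat k y).det := by
  rw [isUnit_iff_ne_zero]
  intro hdet
  obtain ⟨w, hw, hz⟩ := Matrix.exists_mulVec_eq_zero_iff.2 hdet
  apply hw
  obtain ⟨f, hf⟩ : ∃ f : ℕ → ℝ, f = fun n => if h : 1 ≤ n ∧ n ≤ k then w ⟨n - 1, by omega⟩ else 0 :=
    ⟨_, rfl⟩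
  have h0 : f 0 = 0 := by simp [hf]
  have hk : f (k + 1) = 0 := by simp [hf]
  have hwf : w = fun j : Fin k => f ((j : ℕ) + 1) := by
    funext j
    have := j.2
    simp [hf, Nat.succ_le_iff]
  rw [hwf] at hz
  have hrow : ∀ i < k, f (i + 2) = 2 * ((1 - y) / (2 * y)) * f (i + 1) - f i := by
    intro i hi
    have := Cmat_row k y f h0 hk ⟨i, hi⟩
    rw [hz] at this
    simp only [Pi.zero_apply] at this
    field_simp
    linarith
  have hind : ∀ n ≤ k, f n = f 1 * chebU ((n : ℤ) - 1) ((1 - y) / (2 * y)) ∧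
      f (n + 1) = f 1 * chebU (n : ℤ) ((1 - y) / (2 * y)) := by
    intro n
    induction n with
    | zero => intro _; simp [h0, chebU_neg_one, chebU_zero]
    | succ m ih =>
      intro hm
      obtain ⟨a, b⟩ := ih (by omega)
      refine ⟨by push_cast; rw [add_sub_cancel_right]; exact b, ?_⟩
      rw [hrow m (by omega), a, b]
      push_cast
      rw [chebU_rec]
      ring
  have h1 : f 1 = 0 := by
    have := (hind k le_rfl).2
    rw [hk] at this
    exact (mul_eq_zero.1 this.symm).resolve_right hU
  rw [hwf]
  funext j
  rw [(hind j j.2.le).2, h1]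
  simp

lemma chebU_prod (x : ℝ) (k : ℤ) (n : ℕ) :
    chebU (k - n) x * chebU n x - chebU ((n : ℤ) - 1) x * chebU (k - n - 1) x = chebU k x := by
  induction n with
  | zero => simp [chebU_neg_one, chebU_zero]
  | succ m ih =>
    rw [← ih]
    push_cast
    have h1 := chebU_rec m x
    have h2 := chebU_rec (k - m - 1) x
    rw [show k - ((m : ℤ) + 1) = k - m - 1 by ring, show (m : ℤ) + 1 - 1 = m by ring, h1]
    rw [show k - (m : ℤ) - 1 + 1 = k - m by ring] at h2
    rw [h2]
    ring

lemma alph_eq (k : ℕ) (n : ℕ) (x : ℝ) (hU : chebU (k : ℤ) x ≠ 0) :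
    alph k n x = 1 - (chebU ((k : ℤ) - n) x + chebU ((n : ℤ) - 1) x) / chebU k x := by
  unfold alph
  have := chebU_prod x k n
  field_simp
  linarith

/-- With `ψ = (1-y)/(2y)`, the `i`-th row sum of `C(y)⁻¹` equals `α_i(ψ)/(1-3y)` for every
`i ∈ [k]` (here `i : Fin k` corresponds to the 1-based index `i+1`). -/
theorem row_sums_of_inverse (k : ℕ) (hk : 2 ≤ k) (y : ℝ) (hy0 : y ≠ 0)
    (hy3 : y ≠ 1 / 3) (hU : chebU (k : ℤ) ((1 - y) / (2 * y)) ≠ 0) :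
    ∀ i : Fin k, ∑ j : Fin k, (Cmat k y)⁻¹ i j =
      alph k ((i : ℕ) + 1) ((1 - y) / (2 * y)) / (1 - 3 * y) := by
  have hdet := Cmat_det k y hy0 hU
  have h3 : 1 - 3 * y ≠ 0 := fun h => hy3 (by linarith)
  obtain ⟨x, hx⟩ : ∃ x, x = (1 - y) / (2 * y) := ⟨_, rfl⟩
  rw [← hx] at hU ⊢
  have hxy : 1 - y = 2 * x * y := by rw [hx]; field_simp
  obtain ⟨f, hf⟩ : ∃ f : ℕ → ℝ, f = fun n : ℕ => alph k n x / (1 - 3 * y) := ⟨_, rfl⟩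
  have h0 : f 0 = 0 := by
    simp only [hf]
    rw [alph_eq k 0 x hU]
    simp [chebU_neg_one, hU]
  have hk1 : f (k + 1) = 0 := by
    simp only [hf]
    rw [alph_eq k (k + 1) x hU]
    simp [chebU_neg_one, hU]
  have hone : (Cmat k y).mulVec (fun j : Fin k => f ((j : ℕ) + 1)) = fun _ => 1 := by
    funext i
    rw [Cmat_row k y f h0 hk1]
    simp only [hf]
    rw [alph_eq k _ x hU, alph_eq k _ x hU, alph_eq k _ x hU]
    push_cast
    have r1 := chebU_rec (i : ℕ) x
    have r2 := chebU_rec ((k : ℤ) - (i : ℕ) - 1) x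
    rw [show (k : ℤ) - ((i : ℕ) + 1) = k - (i : ℕ) - 1 by ring,
      show (k : ℤ) - ((i : ℕ) + 2) = k - (i : ℕ) - 1 - 1 by ring,
      show ((i : ℕ) : ℤ) + 1 - 1 = (i : ℕ) by ring,
      show ((i : ℕ) : ℤ) + 2 - 1 = (i : ℕ) + 1 by ring, r1]
    rw [show (k : ℤ) - (i : ℕ) - 1 + 1 = k - (i : ℕ) by ring] at r2
    rw [r2, hxy]
    obtain ⟨d, hd⟩ : ∃ d, d = 1 - 3 * y := ⟨_, rfl⟩
    rw [← hd] at h3 ⊢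
    field_simp
    linear_combination (-chebU (k : ℤ) x) * hxy - chebU (k : ℤ) x * hd
  intro i
  have hinv : (Cmat k y)⁻¹.mulVec (fun _ => 1) = fun j : Fin k => f ((j : ℕ) + 1) := by
    rw [← hone, Matrix.mulVec_mulVec, Matrix.nonsing_inv_mul _ hdet, Matrix.one_mulVec]
  have := congrFun hinv i
  simp only [Matrix.mulVec, dotProduct, mul_one, hf] at this
  rw [this]
  push_cast
  rfl
end
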